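/- Let X be a Banach space and let A be a nonempty bounded subset of X. If A is uniquely remotal and M-compact, and the derived set A' of A is compact, then A is a singleton. -/

import Mathlib

open Filter Topology

/-- The farthest distance of `x` from the set `A`: `D(x,A) = sup_{a ∈ A} ‖x - a‖`. -/
noncomputable def farDist {X : Type*} [NormedAddCommGroup X] (x : X) (A : Set X) : ℝ :=
  sSup ((fun a => ‖x - a‖) '' A)

/-- `F(x,A) = {a ∈ A : ‖x - a‖ = D(x,A)}`, the farthest points of `A` from `x`. -/
def farPoints {X : Type*} [NormedAddCommGroup X] (x : X) (A : Set X) : Set X :=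
  {a ∈ A | ‖x - a‖ = farDist x A}

/-- `A` is remotal if `F(x,A)` is nonempty for every `x`. -/
def Remotal {X : Type*} [NormedAddCommGroup X] (A : Set X) : Prop :=
  ∀ x : X, (farPoints x A).Nonempty

/-- `A` is uniquely remotal if `F(x,A)` is a singleton for every `x`. -/
def UniquelyRemotal {X : Type*} [NormedAddCommGroup X] (A : Set X) : Prop :=
  ∀ x : X, ∃ a : X, farPoints x A = {a}

/-- A sequence in `S` is maximizing if `‖x - a n‖ → D(x,S)` for some `x ∈ X`. -/
def MaximizingSeq {X : Type*} [NormedAddCommGroup X] (S : Set X) (a : ℕ → X) : Prop :=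
  (∀ n, a n ∈ S) ∧ ∃ x : X, Tendsto (fun n => ‖x - a n‖) atTop (𝓝 (farDist x S))

/-- `S` is M-compact if every maximizing sequence in `S` has a subsequence converging in `X`. -/
def MCompact {X : Type*} [NormedAddCommGroup X] (S : Set X) : Prop :=
  ∀ a : ℕ → X, MaximizingSeq S a →
    ∃ (φ : ℕ → ℕ) (l : X), StrictMono φ ∧ Tendsto (a ∘ φ) atTop (𝓝 l)

/-- `Far(A) = {a ∈ A : a ∈ F(x,A) for some x ∈ X}`. -/
def farSet {X : Type*} [NormedAddCommGroup X] (A : Set X) : Set X :=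
  {a : X | ∃ x : X, a ∈ farPoints x A}

-- We use Mathlib's `derivedSet A = {x | AccPt x (𝓟 A)}` for the set of limit points.

/-!
Let `q x` be the farthest point of `A` from `x` and let `D x` be its distance. If `A` had two
points, `D` would be bounded below. Then there are a compact set `B ⊆ closure A` containing the
derived set `A'` and a map `c` into `B` such that `q (c a) ≠ a` for all `a` and `c a → b` as
`a → b ∈ A'`. On the compact convex set `C = closedConvexHull B`, attach to `x` the star with centre
`c (q x)` formed by the segments to those `z ∈ C` whose reflection through `x` has distance at least
`2 * D x` from `q x`. The norm is additive along the resulting directions, so `x` can lie in its own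
star only if `q (c (q x)) = q x`, which is excluded.

The graph of this relation is closed: when `x n → x`, `M`-compactness makes a subsequence of
`q (x n)` either settle at `q x` or converge to a limit point `b` of `A` with `‖x - b‖ = D x`, and
in the second case the limits of points of the stars are points `w` with
`‖(x - b) + (x - w)‖ = 2 * D x`. The farthest point from the reflection of `w` is then `q x`, so `w`
is in the star of `x`.

A closed relation on a compact convex set with star-convex values has a fixed point, although convex
combinations of selections need not stay in the values. Given `k`, one chooses `k` selections, each
precise enough for the next, so that convex combinations of their values at nearby points remain
near the graph. On a simplex with `n` vertices, `n + 1` shifted grids blend `n + 1` selections into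
a continuous map, and Brouwer's theorem, which follows from Scarf's lemma, applies to it.
-/

section Counting

variable {α β : Type*} [DecidableEq α] [DecidableEq β]

theorem card_filter_image_erase_eq_two {s : Finset α} {f : α → β}
    (hcard : (s.image f).card + 1 = s.card) :
    (s.filter fun x => (s.erase x).image f = s.image f).card = 2 := by
  obtain ⟨x, hx, y, hy, hxy, hf⟩ := Finset.exists_ne_map_eq_of_card_lt_of_maps_to
    (by omega : (s.image f).card < s.card) fun x hx => Finset.mem_image_of_mem f hx
  suffices s.filter (fun x => (s.erase x).image f = s.image f) = {x, y} by
    rw [this, Finset.card_pair hxy]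
  have image_erase : ∀ x ∈ s, ∀ y ∈ s, x ≠ y → f x = f y → (s.erase x).image f = s.image f := by
    intro x hx y hy hxy hf
    nth_rewrite 2 [← Finset.insert_erase hx]
    rw [Finset.image_insert, Finset.insert_eq_of_mem]
    exact Finset.mem_image.2 ⟨y, Finset.mem_erase.2 ⟨hxy.symm, hy⟩, hf.symm⟩
  ext z
  simp only [Finset.mem_filter, Finset.mem_insert, Finset.mem_singleton]
  refine ⟨fun ⟨hz, himage⟩ => ?_, ?_⟩
  · have hinj : Set.InjOn f (s.erase z) := Finset.injOn_of_card_image_eq <| by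
      rw [himage, Finset.card_erase_of_mem hz]
      omega
    by_contra! hne
    exact hxy (hinj (by simp [hx, hne.1.symm]) (by simp [hy, hne.2.symm]) hf)
  · rintro (rfl | rfl)
    · exact ⟨hx, image_erase z hx y hy hxy hf⟩
    · exact ⟨hy, image_erase z hy x hx hxy.symm hf.symm⟩

theorem sum_card_insert_eq_sum_card_erase [Fintype α] (P Q : Finset α → Prop) [DecidablePred P]
    [DecidablePred Q] :
    ∑ τ with P τ, (Finset.univ.filter fun v => v ∉ τ ∧ Q (insert v τ)).card =
      ∑ ρ with Q ρ, (ρ.filter fun v => P (ρ.erase v)).card := by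
  rw [← Finset.card_sigma, ← Finset.card_sigma]
  refine Finset.card_bij' (fun p _ => ⟨insert p.2 p.1, p.2⟩) (fun p _ => ⟨p.1.erase p.2, p.2⟩)
    ?_ ?_ ?_ ?_ <;>
  rintro ⟨s, v⟩ h <;>
  simp only [Finset.mem_sigma, Finset.mem_filter, Finset.mem_univ, true_and] at h ⊢
  · simpa [Finset.erase_insert h.2.1] using ⟨h.2.2, h.1⟩
  · simpa [Finset.insert_erase h.2.1] using ⟨h.2.2, h.1⟩
  · rw [Finset.erase_insert h.2.1]
  · rw [Finset.insert_erase h.2.1]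

theorem even_card_filter_image_erase_eq [Fintype β] {s : Finset α} {f : α → β}
    (hcard : s.card = Fintype.card β) (himage : s.image f ≠ Finset.univ) (b : β) :
    Even (s.filter fun x => (s.erase x).image f = Finset.univ.erase b).card := by
  by_cases hs : s.image f = Finset.univ.erase b
  · rw [← hs, card_filter_image_erase_eq_two]
    · exact even_two
    · rw [hs, hcard, Finset.card_erase_add_one (Finset.mem_univ b), Finset.card_univ]
  · rw [Finset.filter_false_of_mem fun x _ h => ?_]
    · exact Even.zero
    have hsub : Finset.univ.erase b ⊆ s.image f := h ▸ Finset.image_mono f (Finset.erase_subset x s)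
    by_cases hb : b ∈ s.image f
    · exact himage (Finset.eq_univ_of_forall fun y =>
        (eq_or_ne y b).elim (fun hy => hy ▸ hb) fun hy => hsub (by simp [hy]))
    · exact hs (Finset.Subset.antisymm (fun y hy => Finset.mem_erase.2
        ⟨fun h => hb (h ▸ hy), Finset.mem_univ y⟩) hsub)

end Counting

section Scarf

variable {I V L : Type*} [LinearOrder L]

/-- Dominant pairs in Scarf's sense, for a family `r` of rankings of `V` indexed by `I`. The pair
`(C, P)` of `C ⊆ I` and `P ⊆ V` is encoded as the disjoint sum `ρ` of the *complement* of `C` with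
`P`, so that shrinking `C` and enlarging `P` are both insertions into `ρ`. It is dominant if every
point of `V` is ranked weakly below all of `P` by some index in `C`. -/
def IsDominant (r : I → V → L) (ρ : Finset (I ⊕ V)) : Prop :=
  ∀ y, ∃ i, Sum.inl i ∉ ρ ∧ ∀ x, Sum.inr x ∈ ρ → r i y ≤ r i x

/-- `m i` is the point of `τ` ranked lowest by `i`. -/
def IsLowest (r : I → V → L) (τ : Finset (I ⊕ V)) (m : I → V) : Prop :=
  ∀ i, Sum.inr (m i) ∈ τ ∧ ∀ x, Sum.inr x ∈ τ → r i (m i) ≤ r i x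

/-- The points ranked above the lowest point of `τ` by every index of the pair `τ` except `k`. -/
def aboveExcept (r : I → V → L) (τ : Finset (I ⊕ V)) (m : I → V) (k : I) : Set V :=
  {x | ∀ l, Sum.inl l ∉ τ → l ≠ k → r l (m l) < r l x}

/-- The element whose insertion into `τ` makes up for the loss of the lowest point of `k`: the
point of `aboveExcept r τ m k` ranked highest by `k`, or the index `k` itself if there is none. -/
def IsReplacement (r : I → V → L) (τ : Finset (I ⊕ V)) (m : I → V) (k : I) : I ⊕ V → Prop
  | .inl i => i = k ∧ aboveExcept r τ m k = ∅
  | .inr x => x ∈ aboveExcept r τ m k ∧ ∀ y ∈ aboveExcept r τ m k, r k y ≤ r k x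

variable {r : I → V → L} {τ : Finset (I ⊕ V)} {m : I → V}

theorem exists_isLowest [Finite V] (hτ : ∃ x, Sum.inr x ∈ τ) : ∃ m, IsLowest r τ m := by
  choose m hm using fun i =>
    Set.exists_min_image {x | Sum.inr x ∈ τ} (r i) (Set.toFinite _) hτ
  exact ⟨m, hm⟩

theorem IsDominant.mono {ρ : Finset (I ⊕ V)} (h : IsDominant r ρ) (hτρ : τ ⊆ ρ) :
    IsDominant r τ := fun y =>
  let ⟨i, hi, hle⟩ := h y
  ⟨i, fun hiτ => hi (hτρ hiτ), fun x hx => hle x (hτρ hx)⟩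

theorem IsDominant.exists_lowest_eq (hr : ∀ i, Function.Injective (r i)) (hτ : IsDominant r τ)
    (hm : IsLowest r τ m) {x : V} (hx : Sum.inr x ∈ τ) :
    ∃ i, Sum.inl i ∉ τ ∧ m i = x := by
  obtain ⟨i, hi, hle⟩ := hτ x
  exact ⟨i, hi, hr i (((hm i).2 x hx).antisymm (hle _ (hm i).1))⟩

theorem existsUnique_isReplacement [Finite V] (hr : ∀ i, Function.Injective (r i)) (k : I) :
    ∃! v, IsReplacement r τ m k v := by
  rcases (aboveExcept r τ m k).eq_empty_or_nonempty with hempty | hne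
  · refine ⟨.inl k, ⟨rfl, hempty⟩, ?_⟩
    rintro (i | x) h
    · rw [h.1]
    · exact absurd h.1 (hempty ▸ Set.notMem_empty x)
  · obtain ⟨x, hx, hmax⟩ := Set.exists_max_image _ (r k) (Set.toFinite _) hne
    refine ⟨.inr x, ⟨hx, hmax⟩, ?_⟩
    rintro (i | y) h
    · exact absurd h.2 hne.ne_empty
    · rw [hr k ((hmax y h.1).antisymm (h.2 x hx))]

theorem IsDominant.eq_of_isReplacement (hτ : IsDominant r τ) (hm : IsLowest r τ m) {i j : I}
    {v : I ⊕ V} (hi : IsReplacement r τ m i v) (hj : IsReplacement r τ m j v) : i = j := by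
  rcases v with k | x
  · exact hi.1.symm.trans hj.1
  · obtain ⟨l, hl, hle⟩ := hτ x
    have eq_of_mem : ∀ k, x ∈ aboveExcept r τ m k → l = k := fun k hk =>
      by_contra fun hlk => (hk l hl hlk).not_ge (hle _ (hm l).1)
    exact (eq_of_mem i hi.1).symm.trans (eq_of_mem j hj.1)

section Replacement

variable [DecidableEq I] [DecidableEq V]

/-- The lowest element of `τ` for the index `i`, when an index occurring in `τ` counts as lying
below every point in its own ranking. -/
def lowestElement (τ : Finset (I ⊕ V)) (m : I → V) (i : I) : I ⊕ V :=
  if Sum.inl i ∈ τ then Sum.inl i else Sum.inr (m i)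

theorem lowestElement_mem (hm : IsLowest r τ m) (i : I) : lowestElement τ m i ∈ τ := by
  unfold lowestElement
  split_ifs with h
  exacts [h, (hm i).1]

theorem image_erase_lowestElement_eq_iff [Fintype I] (hm : IsLowest r τ m) {k : I} :
    (Finset.univ.erase k).image (lowestElement τ m) = τ ↔
      Sum.inl k ∉ τ ∧ ∀ x, Sum.inr x ∈ τ → ∃ l ≠ k, Sum.inl l ∉ τ ∧ m l = x := by
  rw [Finset.Subset.antisymm_iff, and_iff_right (Finset.image_subset_iff.2 fun i _ =>
    lowestElement_mem hm i)]
  constructor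
  · refine fun h => ⟨fun hk => ?_, fun x hx => ?_⟩
    · obtain ⟨l, hl, hlk⟩ := Finset.mem_image.1 (h hk)
      unfold lowestElement at hlk
      split_ifs at hlk
      exact Finset.ne_of_mem_erase hl (Sum.inl_injective hlk)
    · obtain ⟨l, hl, hlx⟩ := Finset.mem_image.1 (h hx)
      unfold lowestElement at hlx
      split_ifs at hlx with hlτ
      exact ⟨l, Finset.ne_of_mem_erase hl, hlτ, Sum.inr_injective hlx⟩
  · rintro ⟨hk, h⟩ (i | x) hv
    · have hik : i ≠ k := fun hik => hk (hik ▸ hv)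
      exact Finset.mem_image.2 ⟨i, by simp [hik], if_pos hv⟩
    · obtain ⟨l, hlk, hl, rfl⟩ := h x hv
      exact Finset.mem_image.2 ⟨l, by simp [hlk], if_neg hl⟩

theorem IsDominant.image_lowestElement [Fintype I] (hr : ∀ i, Function.Injective (r i))
    (hτ : IsDominant r τ) (hm : IsLowest r τ m) :
    Finset.univ.image (lowestElement τ m) = τ := by
  refine (Finset.image_subset_iff.2 fun i _ => lowestElement_mem hm i).antisymm ?_
  rintro (i | x) hv
  · exact Finset.mem_image.2 ⟨i, Finset.mem_univ i, if_pos hv⟩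
  · obtain ⟨i, hi, rfl⟩ := hτ.exists_lowest_eq hr hm hv
    exact Finset.mem_image.2 ⟨i, Finset.mem_univ i, if_neg hi⟩

theorem IsDominant.insert_of_isReplacement [Fintype I] (hτ : IsDominant r τ)
    (hm : IsLowest r τ m) {k : I} (hk : (Finset.univ.erase k).image (lowestElement τ m) = τ)
    {v : I ⊕ V} (hv : IsReplacement r τ m k v) : v ∉ τ ∧ IsDominant r (insert v τ) := by
  obtain ⟨hkτ, hlowest⟩ := (image_erase_lowestElement_eq_iff hm).1 hk
  have exists_le : ∀ y ∉ aboveExcept r τ m k, ∃ l ≠ k, Sum.inl l ∉ τ ∧ r l y ≤ r l (m l) := by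
    intro y hy
    simp only [aboveExcept, Set.mem_ofPred_eq, not_forall, not_lt] at hy
    obtain ⟨l, hl, hlk, hle⟩ := hy
    exact ⟨l, hlk, hl, hle⟩
  rcases v with i | x
  · obtain ⟨rfl, hempty⟩ := hv
    refine ⟨hkτ, fun y => ?_⟩
    obtain ⟨l, hli, hl, hle⟩ := exists_le y (hempty ▸ Set.notMem_empty y)
    exact ⟨l, by simp [hli, hl], fun z hz => hle.trans ((hm l).2 z (by simpa using hz))⟩
  · obtain ⟨hx, hmax⟩ := hv
    refine ⟨fun hxτ => ?_, fun y => ?_⟩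
    · obtain ⟨l, hlk, hl, rfl⟩ := hlowest x hxτ
      exact (hx l hl hlk).false
    simp only [Finset.mem_insert, Sum.inr.injEq, forall_eq_or_imp, reduceCtorEq, false_or]
    by_cases hy : y ∈ aboveExcept r τ m k
    · obtain ⟨l, hl, hle⟩ := hτ x
      obtain rfl : l = k := by_contra fun hlk => (hx l hl hlk).not_ge (hle _ (hm l).1)
      exact ⟨l, hl, hmax y hy, fun z hz => (hmax y hy).trans (hle z hz)⟩
    · obtain ⟨l, hlk, hl, hle⟩ := exists_le y hy
      exact ⟨l, hl, hle.trans (hx l hl hlk).le, fun z hz => hle.trans ((hm l).2 z hz)⟩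

theorem exists_mem_aboveExcept_of_isDominant_insert [Fintype I]
    (hr : ∀ i, Function.Injective (r i)) (hm : IsLowest r τ m)
    (hcard : τ.card + 1 = Fintype.card I) {x : V} (hx : Sum.inr x ∉ τ)
    (hdom : IsDominant r (insert (Sum.inr x) τ)) :
    ∃ k, (Finset.univ.erase k).image (lowestElement τ m) = τ ∧ x ∈ aboveExcept r τ m k := by
  simp only [IsDominant, Finset.mem_insert, Sum.inr.injEq, forall_eq_or_imp, reduceCtorEq,
    false_or] at hdom
  have hne : ∀ l, r l x ≠ r l (m l) := fun l h => hx (hr l h ▸ (hm l).1)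
  obtain ⟨k, hk, -, hkx⟩ := hdom x
  have hlowest : ∀ z, Sum.inr z ∈ τ → ∃ l, Sum.inl l ∉ τ ∧ m l = z ∧ r l (m l) < r l x := by
    intro z hz
    obtain ⟨l, hl, hlx, hle⟩ := hdom z
    obtain rfl : m l = z := hr l (((hm l).2 z hz).antisymm (hle _ (hm l).1))
    exact ⟨l, hl, rfl, hlx.lt_of_ne (hne l).symm⟩
  let below := Finset.univ.filter fun l => Sum.inl l ∈ τ ∨ r l (m l) < r l x
  have hsub : τ ⊆ below.image (lowestElement τ m) := by
    rintro (l | z) hw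
    · exact Finset.mem_image.2 ⟨l, by simp [below, hw], if_pos hw⟩
    · obtain ⟨l, hl, rfl, hlx⟩ := hlowest z hw
      exact Finset.mem_image.2 ⟨l, by simp [below, hlx], if_neg hl⟩
  have hbelow : below = Finset.univ.erase k := by
    refine Finset.eq_of_subset_of_card_le (fun l hl => Finset.mem_erase.2 ⟨?_, by simp⟩) ?_
    · rintro rfl
      simp [below, hk, (hkx _ (hm l).1).not_gt] at hl
    · have := (Finset.card_le_card hsub).trans Finset.card_image_le
      rw [Finset.card_erase_of_mem (Finset.mem_univ k), Finset.card_univ]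
      omega
  refine ⟨k, ?_, fun l hl hlk => ?_⟩
  · rw [hbelow] at hsub
    exact (Finset.image_subset_iff.2 fun l _ => lowestElement_mem hm l).antisymm hsub
  · have : l ∈ below := hbelow ▸ Finset.mem_erase.2 ⟨hlk, Finset.mem_univ l⟩
    simpa [below, hl] using this

theorem exists_isReplacement_of_isDominant_insert [Fintype I] (hr : ∀ i, Function.Injective (r i))
    (hm : IsLowest r τ m) (hcard : τ.card + 1 = Fintype.card I) {v : I ⊕ V} (hv : v ∉ τ)
    (hdom : IsDominant r (insert v τ)) :
    ∃ k, (Finset.univ.erase k).image (lowestElement τ m) = τ ∧ IsReplacement r τ m k v := by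
  rcases v with k | x
  · refine ⟨k, (image_erase_lowestElement_eq_iff hm).2 ⟨hv, fun x hx => ?_⟩, rfl,
      Set.eq_empty_iff_forall_notMem.2 fun y hy => ?_⟩
    · obtain ⟨l, hl, hle⟩ := hdom x
      simp only [Finset.mem_insert, Sum.inl.injEq, not_or] at hl
      exact ⟨l, hl.1, hl.2, hr l <| ((hm l).2 x hx).antisymm (hle _ (by simp [(hm l).1]))⟩
    · obtain ⟨l, hl, hle⟩ := hdom y
      simp only [Finset.mem_insert, Sum.inl.injEq, not_or] at hl
      exact (hy l hl.2 hl.1).not_ge (hle _ (by simp [(hm l).1]))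
  · obtain ⟨k, hk, hkx⟩ := exists_mem_aboveExcept_of_isDominant_insert hr hm hcard hv hdom
    refine ⟨k, hk, hkx, fun y hy => ?_⟩
    obtain ⟨l, hl, hle⟩ := hdom y
    simp only [Finset.mem_insert, reduceCtorEq, false_or] at hl
    obtain rfl : l = k :=
      by_contra fun hlk => (hy l hl hlk).not_ge (hle _ (by simp [(hm l).1]))
    exact hle x (by simp)

theorem card_isDominant_insert_eq_two [Fintype I] [Fintype V]
    (hr : ∀ i, Function.Injective (r i)) (hτ : IsDominant r τ)
    (hpoint : ∃ x, Sum.inr x ∈ τ) (hcard : τ.card + 1 = Fintype.card I)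
    [DecidablePred fun v => v ∉ τ ∧ IsDominant r (insert v τ)] :
    (Finset.univ.filter fun v => v ∉ τ ∧ IsDominant r (insert v τ)).card = 2 := by
  obtain ⟨m, hm⟩ := exists_isLowest (r := r) hpoint
  have himage := hτ.image_lowestElement hr hm
  rw [← card_filter_image_erase_eq_two (s := Finset.univ) (f := lowestElement τ m)
    (by rw [himage, hcard, Finset.card_univ]), himage]
  choose replacement hreplacement _ using fun k =>
    existsUnique_isReplacement (τ := τ) (m := m) hr k
  symm
  refine Finset.card_bij (fun k _ => replacement k) (fun k hk => ?_) (fun i _ j _ hij => ?_)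
    fun v hv => ?_
  · simpa using hτ.insert_of_isReplacement hm (by simpa using hk) (hreplacement k)
  · exact hτ.eq_of_isReplacement hm (hreplacement i) (hij ▸ hreplacement j)
  · simp only [Finset.mem_filter_univ] at hv
    obtain ⟨k, hk, hkv⟩ := exists_isReplacement_of_isDominant_insert hr hm hcard hv.1 hv.2
    exact ⟨k, by simpa using hk, (existsUnique_isReplacement hr k).unique (hreplacement k) hkv⟩

theorem isDominant_image_inl_erase [Fintype I] (i₀ : I) :
    IsDominant r ((Finset.univ.erase i₀).image Sum.inl) := fun _ =>
  ⟨i₀, by simp, fun x hx => by simp at hx⟩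

theorem card_isDominant_insert_image_inl_erase_eq_one [Fintype I] [Fintype V] [Nonempty V]
    (hr : ∀ i, Function.Injective (r i)) {i₀ : I} (hτ : τ = (Finset.univ.erase i₀).image Sum.inl)
    [DecidablePred fun v => v ∉ τ ∧ IsDominant r (insert v τ)] :
    (Finset.univ.filter fun v => v ∉ τ ∧ IsDominant r (insert v τ)).card = 1 := by
  have not_mem_iff : ∀ i, Sum.inl i ∉ τ ↔ i = i₀ := fun i => by simp [hτ]
  have inr_notMem : ∀ y, Sum.inr y ∉ τ := fun y => by simp [hτ]
  obtain ⟨x, hx⟩ := Finite.exists_max (r i₀)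
  refine Finset.card_eq_one.2 ⟨Sum.inr x, Finset.eq_singleton_iff_unique_mem.2 ⟨?_, ?_⟩⟩
  · simp only [Finset.mem_filter_univ]
    exact ⟨inr_notMem x, fun y => ⟨i₀, by simp [not_mem_iff],
      fun z hz => by simpa [show z = x by simpa [inr_notMem] using hz] using hx y⟩⟩
  · simp only [Finset.mem_filter_univ]
    rintro (i | y) ⟨hi, hdom⟩
    all_goals obtain ⟨l, hl, hle⟩ := hdom x
    all_goals simp only [Finset.mem_insert, not_or, not_mem_iff] at hi hl
    · simp [hi, hl.2] at hl
    · obtain rfl := hl.2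
      rw [hr l ((hx y).antisymm (hle y (by simp)))]

theorem eq_image_inl_of_image_elim_eq {ρ : Finset (I ⊕ V)} {c : V → I} {s : Finset I}
    (hρ : ∀ x, Sum.inr x ∉ ρ) (himage : ρ.image (Sum.elim id c) = s) : ρ = s.image Sum.inl := by
  subst himage
  ext (i | x)
  · simp [hρ]
  · simp [hρ]

end Replacement

theorem exists_isDominant_surjOn [Finite I] [Finite V] [Nonempty V]
    (hr : ∀ i, Function.Injective (r i)) (c : V → I) :
    ∃ ρ, IsDominant r ρ ∧ ∀ i, ∃ v ∈ ρ, Sum.elim id c v = i := by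
  classical
  have := Fintype.ofFinite I
  have := Fintype.ofFinite V
  by_contra! hnone
  let i₀ := c (Classical.arbitrary V)
  let IsRoom (ρ : Finset (I ⊕ V)) : Prop := ρ.card = Fintype.card I ∧ IsDominant r ρ
  let IsDoor (τ : Finset (I ⊕ V)) : Prop := τ.card + 1 = Fintype.card I ∧ IsDominant r τ ∧
    τ.image (Sum.elim id c) = Finset.univ.erase i₀
  let outer : Finset (I ⊕ V) := (Finset.univ.erase i₀).image Sum.inl
  have houter : IsDoor outer :=
    ⟨by rw [Finset.card_image_of_injective _ Sum.inl_injective,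
        Finset.card_erase_add_one (Finset.mem_univ i₀), Finset.card_univ],
      isDominant_image_inl_erase i₀, by simp [outer, Finset.image_image]⟩
  have hrooms : ∀ τ, IsDoor τ → (Finset.univ.filter fun v => v ∉ τ ∧ IsRoom (insert v τ)) =
      Finset.univ.filter fun v => v ∉ τ ∧ IsDominant r (insert v τ) := fun τ hτ =>
    Finset.filter_congr fun v _ => and_congr_right fun hv => by
      simp [IsRoom, Finset.card_insert_of_notMem hv, hτ.1]
  have hinner : ∀ τ, IsDoor τ → τ ≠ outer →
      (Finset.univ.filter fun v => v ∉ τ ∧ IsRoom (insert v τ)).card = 2 := by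
    intro τ hτ hne
    rw [hrooms τ hτ]
    refine card_isDominant_insert_eq_two hr hτ.2.1 (not_forall_not.1 fun hτ' => ?_) hτ.1
    exact hne (eq_image_inl_of_image_elim_eq hτ' hτ.2.2)
  have hdoors : ∀ ρ, IsRoom ρ → Even (ρ.filter fun v => IsDoor (ρ.erase v)).card := by
    intro ρ hρ
    obtain ⟨i, hi⟩ := hnone ρ hρ.2
    have hne : ρ.image (Sum.elim id c) ≠ Finset.univ := fun h =>
      let ⟨v, hv, hvi⟩ := Finset.mem_image.1 (h ▸ Finset.mem_univ i)
      hi v hv hvi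
    convert even_card_filter_image_erase_eq hρ.1 hne i₀ using 2
    refine Finset.filter_congr fun v hv => ?_
    simp [IsDoor, Finset.card_erase_add_one hv, hρ.1, hρ.2.mono (Finset.erase_subset v ρ)]
  have hcount := sum_card_insert_eq_sum_card_erase IsDoor IsRoom
  rw [← Finset.add_sum_erase _ _ ((Finset.mem_filter_univ _).2 houter), hrooms _ houter,
    card_isDominant_insert_image_inl_erase_eq_one hr rfl] at hcount
  refine Nat.not_even_iff_odd.2 (odd_one.add_even (Finset.even_sum _ fun τ hτ => ?_))
    (hcount ▸ Finset.even_sum _ fun ρ hρ => hdoors ρ ((Finset.mem_filter_univ ρ).1 hρ))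
  obtain ⟨hne, hτ⟩ : τ ≠ outer ∧ IsDoor τ := by simpa using hτ
  rw [hinner τ hτ hne]
  exact even_two

end Scarf

theorem exists_finset_forall_exists_forall_le {I V : Type*} [Finite I] [Finite V] [Nonempty V]
    (a : I → V → ℝ) (c : V → I) : ∃ (C : Finset I) (P : Finset V),
      (∀ i ∈ C, ∃ x ∈ P, c x = i) ∧ ∀ y, ∃ i ∈ C, ∀ x ∈ P, a i y ≤ a i x := by
  classical
  have := Fintype.ofFinite I
  have := Fintype.ofFinite V
  -- Ties are broken by an arbitrary enumeration of `V`.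
  let r : I → V → ℝ ×ₗ Fin (Fintype.card V) := fun i x => toLex (a i x, Fintype.equivFin V x)
  have hr : ∀ i, Function.Injective (r i) := fun i x y h =>
    (Fintype.equivFin V).injective (congrArg Prod.snd (toLex.injective h))
  obtain ⟨ρ, hρ, hsurj⟩ := exists_isDominant_surjOn hr c
  refine ⟨Finset.univ.filter fun i => Sum.inl i ∉ ρ, Finset.univ.filter fun x => Sum.inr x ∈ ρ,
    fun i hi => ?_, fun y => ?_⟩
  · obtain ⟨j | x, hv, hvi⟩ := hsurj i
    · obtain rfl : j = i := hvi
      exact absurd hv (by simpa using hi)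
    · exact ⟨x, by simpa using hv, hvi⟩
  · obtain ⟨i, hi, hle⟩ := hρ y
    exact ⟨i, by simpa using hi, fun x hx =>
      (Prod.Lex.toLex_le_toLex'.1 (hle x (by simpa using hx))).1⟩

section Brouwer

variable {ι : Type*} [Fintype ι] [Nonempty ι]

theorem exists_le_of_mem_stdSimplex {x y : ι → ℝ} (hx : x ∈ stdSimplex ℝ ι)
    (hy : y ∈ stdSimplex ℝ ι) : ∃ i, x i ≤ y i := by
  by_contra! h
  have := Finset.sum_lt_sum_of_nonempty Finset.univ_nonempty fun i (_ : i ∈ Finset.univ) => h i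
  rw [hx.2, hy.2] at this
  exact this.false

theorem exists_finset_forall_exists_forall_le_add {f : (ι → ℝ) → ι → ℝ}
    (hf : Set.MapsTo f (stdSimplex ℝ ι) (stdSimplex ℝ ι)) {ε : ℝ} (hε : 0 < ε) :
    ∃ (C : Finset ι) (P : Finset (ι → ℝ)), ↑P ⊆ stdSimplex ℝ ι ∧
      (∀ i ∈ C, ∃ x ∈ P, x i ≤ f x i) ∧
      ∀ y ∈ stdSimplex ℝ ι, ∃ i ∈ C, ∀ x ∈ P, y i ≤ x i + ε := by
  classical
  obtain ⟨T, hT, hfin, hcover⟩ := (isCompact_stdSimplex ℝ ι).finite_cover_balls hε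
  have := hfin.to_subtype
  have : Nonempty T := by
    obtain ⟨p, hp⟩ : (stdSimplex ℝ ι).Nonempty :=
      ⟨_, single_mem_stdSimplex ℝ (Classical.arbitrary ι)⟩
    obtain ⟨t, ht, -⟩ := Set.mem_iUnion₂.1 (hcover hp)
    exact ⟨t, ht⟩
  choose c hc using fun t : T => exists_le_of_mem_stdSimplex (hT t.2) (hf (hT t.2))
  obtain ⟨C, P, hcolour, hdom⟩ := exists_finset_forall_exists_forall_le (fun i (t : T) => t.1 i) c
  refine ⟨C, P.image (↑), ?_, fun i hi => ?_, fun y hy => ?_⟩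
  · rw [Finset.coe_image, Set.image_subset_iff]
    exact fun t _ => hT t.2
  · obtain ⟨t, ht, rfl⟩ := hcolour i hi
    exact ⟨t, Finset.mem_image_of_mem _ ht, hc t⟩
  · obtain ⟨t, ht, hyt⟩ := Set.mem_iUnion₂.1 (hcover hy)
    obtain ⟨i, hi, hle⟩ := hdom ⟨t, ht⟩
    refine ⟨i, hi, Finset.forall_mem_image.2 fun x hx => ?_⟩
    have := (abs_lt.1 ((dist_le_pi_dist y t i).trans_lt hyt)).2
    linarith [hle x hx]

theorem exists_forall_le_and_le_add {C : Finset ι} {P : Finset (ι → ℝ)} (hPne : P.Nonempty)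
    (hP : ↑P ⊆ stdSimplex ℝ ι) {ε : ℝ}
    (hdom : ∀ y ∈ stdSimplex ℝ ι, ∃ i ∈ C, ∀ x ∈ P, y i ≤ x i + ε) :
    ∃ z : ι → ℝ, (∀ i ∉ C, z i = 0) ∧ ∀ x ∈ P, ∀ i, z i ≤ x i ∧ x i ≤ z i + Fintype.card ι * ε := by
  classical
  choose m hmP hm using fun i : ι => P.exists_min_image (fun x => x i) hPne
  let z : ι → ℝ := fun i => if i ∈ C then m i i else 0
  have hz0 : ∀ i ∉ C, z i = 0 := fun i hi => if_neg hi
  have hzC : ∀ i ∈ C, z i = m i i := fun i hi => if_pos hi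
  have hz : ∀ i, 0 ≤ z i := fun i => by
    by_cases hi : i ∈ C
    · exact (hP (hmP i)).1 i |>.trans_eq (hzC i hi).symm
    · exact (hz0 i hi).ge
  have hle : ∀ x ∈ P, ∀ i, z i ≤ x i := fun x hx i => by
    by_cases hi : i ∈ C
    · exact (hzC i hi).trans_le (hm i x hx)
    · exact (hz0 i hi).trans_le ((hP hx).1 i)
  have hdefect : ∀ x ∈ P, ∑ i, (x i - z i) = 1 - ∑ i, z i := fun x hx => by
    rw [Finset.sum_sub_distrib, (hP hx).2]
  have hsum : 1 - ∑ i, z i ≤ Fintype.card ι * ε := by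
    obtain ⟨x, hx⟩ := hPne
    have hdefect_nonneg : 0 ≤ 1 - ∑ i, z i :=
      hdefect x hx ▸ Finset.sum_nonneg fun i _ => sub_nonneg.2 (hle x hx i)
    have hn : (0 : ℝ) < Fintype.card ι := Nat.cast_pos.2 Fintype.card_pos
    obtain ⟨i, hi, hspread⟩ := hdom (fun i => z i + (1 - ∑ i, z i) / Fintype.card ι)
      ⟨fun i => add_nonneg (hz i) (div_nonneg hdefect_nonneg hn.le), by
        rw [Finset.sum_add_distrib, Finset.sum_const, Finset.card_univ, nsmul_eq_mul,
          mul_div_cancel₀ _ hn.ne', add_sub_cancel]⟩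
    have := hspread _ (hmP i)
    rw [← hzC i hi, add_le_add_iff_left, div_le_iff₀ hn] at this
    rwa [mul_comm]
  refine ⟨z, hz0, fun x hx i => ⟨hle x hx i, ?_⟩⟩
  have := Finset.single_le_sum (f := fun i => x i - z i)
    (fun i _ => sub_nonneg.2 (hle x hx i)) (Finset.mem_univ i)
  linarith [hdefect x hx]

theorem exists_approx_fixed_stdSimplex {f : (ι → ℝ) → ι → ℝ}
    (hf : Set.MapsTo f (stdSimplex ℝ ι) (stdSimplex ℝ ι))
    (hcont : ContinuousOn f (stdSimplex ℝ ι)) {η : ℝ} (hη : 0 < η) :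
    ∃ x ∈ stdSimplex ℝ ι, ∀ i, x i ≤ f x i + η := by
  classical
  obtain ⟨δ, hδ, hfδ⟩ := Metric.uniformContinuousOn_iff_le.1
    ((isCompact_stdSimplex ℝ ι).uniformContinuousOn_of_continuous hcont) (η / 2) (by positivity)
  have hn : (0 : ℝ) < Fintype.card ι := Nat.cast_pos.2 Fintype.card_pos
  obtain ⟨C, P, hP, hcolour, hdom⟩ := exists_finset_forall_exists_forall_le_add hf
    (ε := min (η / 2) δ / Fintype.card ι) (by positivity)
  obtain ⟨i₀, hi₀, -⟩ := hdom _ (single_mem_stdSimplex ℝ (Classical.arbitrary ι))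
  obtain ⟨x, hx, -⟩ := hcolour i₀ hi₀
  obtain ⟨z, hz0, hz⟩ := exists_forall_le_and_le_add ⟨x, hx⟩ hP hdom
  have hclose : ∀ y ∈ P, ∀ i, z i ≤ y i ∧ y i ≤ z i + min (η / 2) δ := fun y hy i =>
    ⟨(hz y hy i).1, by simpa [mul_div_cancel₀ _ hn.ne'] using (hz y hy i).2⟩
  refine ⟨x, hP hx, fun i => ?_⟩
  have hxi := (hclose x hx i).2.trans (add_le_add_right (min_le_left _ _) _)
  by_cases hi : i ∈ C
  · obtain ⟨y, hy, hyi⟩ := hcolour i hi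
    have hxy : dist x y ≤ δ := (dist_pi_le_iff hδ.le).2 fun j => by
      have := hclose x hx j
      have := hclose y hy j
      have := min_le_right (η / 2) δ
      rw [Real.dist_eq, abs_le]
      constructor <;> linarith
    have := (abs_le.1 ((dist_le_pi_dist (f x) (f y) i).trans
      (hfδ x (hP hx) y (hP hy) hxy))).1
    linarith [(hclose y hy i).1]
  · rw [hz0 i hi] at hxi
    linarith [(hf (hP hx)).1 i]

/-- **Brouwer's fixed-point theorem** for the standard simplex. -/
theorem exists_fixed_stdSimplex {f : (ι → ℝ) → ι → ℝ}
    (hf : Set.MapsTo f (stdSimplex ℝ ι) (stdSimplex ℝ ι))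
    (hcont : ContinuousOn f (stdSimplex ℝ ι)) : ∃ x ∈ stdSimplex ℝ ι, f x = x := by
  choose u hu hfu using fun n : ℕ =>
    exists_approx_fixed_stdSimplex hf hcont (Nat.one_div_pos_of_nat (α := ℝ) (n := n))
  obtain ⟨x, hx, φ, hφ, hlim⟩ := (isCompact_stdSimplex ℝ ι).tendsto_subseq hu
  have hflim : Tendsto (f ∘ u ∘ φ) atTop (𝓝 (f x)) :=
    (hcont x hx).tendsto.comp (tendsto_nhdsWithin_iff.2 ⟨hlim, .of_forall fun n => hu (φ n)⟩)
  have hle : ∀ i, x i ≤ f x i := fun i => by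
    refine le_of_tendsto_of_tendsto' (tendsto_pi_nhds.1 hlim i) (b := atTop) (g := fun n =>
      f (u (φ n)) i + 1 / ((φ n : ℝ) + 1)) ?_ fun n => hfu (φ n) i
    simpa using (tendsto_pi_nhds.1 hflim i).add
      ((tendsto_one_div_add_atTop_nhds_zero_nat (𝕜 := ℝ)).comp hφ.tendsto_atTop)
  refine ⟨x, hx, funext fun i => ?_⟩
  have := (Finset.sum_eq_sum_iff_of_le fun i _ => hle i).1 (hx.2.trans (hf hx).2.symm)
  exact (this i (Finset.mem_univ i)).symm

end Brouwer

section StarConvexValued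

theorem exists_forall_dist_lt_exists_mem {α β : Type*} [MetricSpace α] [MetricSpace β]
    {G : Set (α × β)} (hG : IsCompact G) (x : α) {ε : ℝ} (hε : 0 < ε) :
    ∃ δ > 0, ∀ y z, (y, z) ∈ G → dist y x < δ → ∃ z', (x, z') ∈ G ∧ dist z z' < ε := by
  let K : Set (α × β) := G ∩ ⋂ (z' : β) (_ : (x, z') ∈ G), {p | ε ≤ dist p.2 z'}
  have hK : IsCompact K := hG.inter_right <| isClosed_biInter fun z' _ =>
    isClosed_le continuous_const (continuous_snd.dist continuous_const)
  have hx : x ∉ Prod.fst '' K := by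
    rintro ⟨⟨_, z⟩, ⟨hz, hz'⟩, rfl⟩
    exact hε.not_ge (by simpa using Set.mem_iInter₂.1 hz' z hz)
  obtain ⟨δ, hδ, hball⟩ := Metric.isOpen_iff.1
    (hK.image continuous_fst).isClosed.isOpen_compl x hx
  refine ⟨δ, hδ, fun y z hz hy => ?_⟩
  by_contra! hcon
  exact hball hy ⟨(y, z), ⟨hz, Set.mem_iInter₂.2 hcon⟩, rfl⟩

theorem exists_uniform_upperSemicontinuous {α β : Type*} [MetricSpace α] [MetricSpace β]
    {C : Set α} (hC : IsCompact C) {G : Set (α × β)} (hG : IsCompact G) {ε : ℝ} (hε : 0 < ε) :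
    ∃ r > 0, ∀ u ∈ C, ∃ x ∈ C, dist x u < ε ∧ ∀ y z, (y, z) ∈ G → dist y u < r →
      ∃ z', (x, z') ∈ G ∧ dist z z' < ε := by
  choose δ hδ hGδ using fun x => exists_forall_dist_lt_exists_mem hG x hε
  obtain ⟨r, hr, hcover⟩ := lebesgue_number_lemma_of_metric
    (c := fun x : C => Metric.ball (x : α) (min ε (δ x))) hC (fun _ => Metric.isOpen_ball)
    fun x hx => Set.mem_iUnion.2 ⟨⟨x, hx⟩, Metric.mem_ball_self (lt_min hε (hδ x))⟩
  refine ⟨r, hr, fun u hu => ?_⟩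
  obtain ⟨x, hx⟩ := hcover u hu
  refine ⟨x, x.2, ?_, fun y z hz hy => hGδ x y z hz ((hx hy).trans_le (min_le_right _ _))⟩
  rw [dist_comm]
  exact (Metric.mem_ball.1 (hx (Metric.mem_ball_self hr))).trans_le (min_le_left _ _)

variable {E : Type*} [NormedAddCommGroup E] [NormedSpace ℝ E]

theorem mem_thickening_of_starConvex {G : Set (E × E)} {x y a z v w : E} {ε : ℝ}
    (hstar : StarConvex ℝ a {z | (x, z) ∈ G}) (hxy : dist y x < ε) (hz : (x, z) ∈ G)
    (hvz : dist v z < ε) (hw : w ∈ segment ℝ a v) : (y, w) ∈ Metric.thickening ε G := by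
  obtain ⟨b, t, hb, ht, hbt, rfl⟩ := hw
  refine Metric.mem_thickening_iff.2 ⟨_, hstar hz hb ht hbt, max_lt hxy ?_⟩
  calc dist (b • a + t • v) (b • a + t • z) = t * dist v z := by
        rw [dist_add_left, dist_smul₀, Real.norm_of_nonneg ht]
    _ ≤ dist v z := mul_le_of_le_one_left dist_nonneg (by linarith)
    _ < ε := hvz

theorem exists_selection_segment_subset_thickening {C : Set E} (hC : IsCompact C)
    {G : Set (E × E)} (hG : IsCompact G) {s : E → E} (hs : ∀ x ∈ C, (x, s x) ∈ G)
    (hsC : Set.MapsTo s C C) (hstar : ∀ x ∈ C, StarConvex ℝ (s x) {z | (x, z) ∈ G})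
    {ε : ℝ} (hε : 0 < ε) :
    ∃ δ > 0, ∃ q : E → E, Set.MapsTo q C C ∧ ∀ y, ∀ u ∈ C, dist u y < δ →
      (y, q u) ∈ Metric.thickening ε G ∧ ∀ v, (y, v) ∈ Metric.thickening δ G →
        ∀ w ∈ segment ℝ (q u) v, (y, w) ∈ Metric.thickening ε G := by
  obtain ⟨r, hr, hU⟩ := exists_uniform_upperSemicontinuous hC hG (half_pos hε)
  choose! p hpC hpd hp using hU
  refine ⟨min (ε / 2) (r / 2), by positivity, s ∘ p, hsC.comp hpC, fun y u hu huy => ?_⟩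
  obtain ⟨huε, hur⟩ := lt_min_iff.1 huy
  have hy : dist y (p u) < ε := by
    linarith [dist_triangle_right y (p u) u, dist_comm y u, hpd u hu]
  refine ⟨Metric.mem_thickening_iff.2 ⟨_, hs _ (hpC u hu), ?_⟩, fun v hv w hw => ?_⟩
  · simpa [Prod.dist_eq, hε] using hy
  · obtain ⟨⟨y', z⟩, hG', hdist⟩ := Metric.mem_thickening_iff.1 hv
    obtain ⟨⟨-, hvε⟩, hyr, -⟩ : (dist y y' < ε / 2 ∧ dist v z < ε / 2) ∧
        dist y y' < r / 2 ∧ dist v z < r / 2 := by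
      simpa only [Prod.dist_eq, max_lt_iff, lt_min_iff] using hdist
    obtain ⟨z', hz', hzz'⟩ := hp u hu y' z hG' (by
      linarith [dist_triangle y' y u, dist_comm y' y, dist_comm y u])
    exact mem_thickening_of_starConvex (hstar _ (hpC u hu)) hy hz'
      (by linarith [dist_triangle v z z']) hw

theorem exists_selections_convexHull_subset_thickening {C : Set E} (hC : IsCompact C)
    {G : Set (E × E)} (hG : IsCompact G) {s : E → E} (hs : ∀ x ∈ C, (x, s x) ∈ G)
    (hsC : Set.MapsTo s C C) (hstar : ∀ x ∈ C, StarConvex ℝ (s x) {z | (x, z) ∈ G}) (k : ℕ)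
    {ε : ℝ} (hε : 0 < ε) :
    ∃ d > 0, ∃ c : ℕ → E → E, (∀ j, Set.MapsTo (c j) C C) ∧
      ∀ (y : E) (u : ℕ → E) (t : Finset ℕ), t ⊆ Finset.range k → t.Nonempty →
        (∀ j ∈ t, u j ∈ C ∧ dist (u j) y < d) →
        ∀ v ∈ convexHull ℝ ((fun j => c j (u j)) '' t), (y, v) ∈ Metric.thickening ε G := by
  induction k generalizing ε with
  | zero =>
    refine ⟨1, one_pos, fun _ => id, fun _ => Set.mapsTo_id C, fun y u t ht hne => ?_⟩
    simp [Finset.subset_empty.1 ht] at hne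
  | succ k ih =>
    obtain ⟨δ, hδ, q, hqC, hq⟩ := exists_selection_segment_subset_thickening hC hG hs hsC hstar hε
    obtain ⟨d, hd, c, hcC, hc⟩ := ih (ε := min ε δ) (by positivity)
    refine ⟨min d δ, by positivity, Function.update c k q, fun j => ?_,
      fun y u t ht hne hu v hv => ?_⟩
    · rcases eq_or_ne j k with rfl | hj
      · simpa using hqC
      · simpa [hj] using hcC j
    have herase : (fun j => Function.update c k q j (u j)) '' (t.erase k) =
        (fun j => c j (u j)) '' (t.erase k) :=
      Set.image_congr fun j hj => by simp [Finset.ne_of_mem_erase hj]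
    have hold : (t.erase k).Nonempty → ∀ v ∈ convexHull ℝ ((fun j => c j (u j)) '' (t.erase k)),
        (y, v) ∈ Metric.thickening (min ε δ) G := fun hne' =>
      hc y u (t.erase k) (by rwa [← Finset.subset_insert_iff, ← Finset.range_add_one]) hne'
        fun j hj => (hu j (Finset.mem_of_mem_erase hj)).imp_right fun h =>
          h.trans_le (min_le_left _ _)
    by_cases hk : k ∈ t
    · obtain ⟨hnew, hjoin⟩ := hq y (u k) (hu k hk).1 ((hu k hk).2.trans_le (min_le_right _ _))
      rw [← Finset.insert_erase hk, Finset.coe_insert, Set.image_insert_eq, herase,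
        Function.update_self] at hv
      rcases (t.erase k).eq_empty_or_nonempty with hempty | hne'
      · obtain rfl : v = q (u k) := by simpa [hempty] using hv
        exact hnew
      · rw [convexHull_insert ((Finset.coe_nonempty.2 hne').image _), mem_convexJoin] at hv
        obtain ⟨a, rfl, b, hb, hvb⟩ := hv
        exact hjoin b (Metric.thickening_mono (min_le_right _ _) G (hold hne' b hb)) v hvb
    · rw [Finset.erase_eq_of_notMem hk] at herase hold
      exact Metric.thickening_mono (min_le_left _ _) G (hold hne v (herase ▸ hv))

end StarConvexValued

section GridPatching

variable {ι : Type*} [Fintype ι]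

/-- A weight vanishing exactly on the boundaries of the cubes of the `k`-th of the `card ι + 1`
diagonally shifted grids of mesh `1 / N`. -/
noncomputable def gridWeight (N : ℝ) (k : ℕ) (x : ι → ℝ) : ℝ :=
  ∏ i, |Real.sin ((N * x i - k / (Fintype.card ι + 1)) * Real.pi)|

/-- The index of the cube of the `k`-th shifted grid of mesh `1 / N` that contains `x`. -/
noncomputable def gridLabel (N : ℝ) (k : ℕ) (x : ι → ℝ) (i : ι) : ℤ :=
  ⌊N * x i - k / (Fintype.card ι + 1)⌋

theorem continuous_gridWeight (N : ℝ) (k : ℕ) : Continuous (gridWeight (ι := ι) N k) := by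
  unfold gridWeight
  fun_prop

theorem gridWeight_nonneg (N : ℝ) (k : ℕ) (x : ι → ℝ) : 0 ≤ gridWeight N k x :=
  Finset.prod_nonneg fun _ _ => abs_nonneg _

theorem gridWeight_eq_zero_iff {N : ℝ} {k : ℕ} {x : ι → ℝ} :
    gridWeight N k x = 0 ↔ ∃ i, ∃ m : ℤ, N * x i - k / (Fintype.card ι + 1) = m := by
  simp only [gridWeight, Finset.prod_eq_zero_iff, Finset.mem_univ, true_and, abs_eq_zero,
    Real.sin_eq_zero_iff, mul_eq_mul_right_iff, Real.pi_ne_zero, or_false]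
  simp only [eq_comm]

-- A coordinate lies on the boundary of at most one of the shifted grids, and there is one grid
-- more than there are coordinates.
theorem sum_gridWeight_pos (N : ℝ) (x : ι → ℝ) :
    0 < ∑ k ∈ Finset.range (Fintype.card ι + 1), gridWeight N k x := by
  refine (Finset.sum_nonneg fun k _ => gridWeight_nonneg N k x).lt_of_ne' fun h => ?_
  rw [Finset.sum_eq_zero_iff_of_nonneg fun k _ => gridWeight_nonneg N k x] at h
  choose g m hgm using fun k : Fin (Fintype.card ι + 1) =>
    gridWeight_eq_zero_iff.1 (h k (Finset.mem_range.2 k.2))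
  obtain ⟨a, b, hab, hgab⟩ := Fintype.exists_ne_map_eq_of_card_lt g (by simp)
  have ha := hgm a
  have hb := hgm b
  rw [hgab] at ha
  have hdiff : ((b : ℕ) : ℝ) - (a : ℕ) = (m a - m b) * (Fintype.card ι + 1) := by
    have : (0 : ℝ) < Fintype.card ι + 1 := by positivity
    field_simp at ha hb
    linarith
  have hcast : ((b : ℕ) : ℤ) - (a : ℕ) = (m a - m b) * ((Fintype.card ι + 1 : ℕ) : ℤ) := by
    exact_mod_cast hdiff
  have hzero := Int.eq_zero_of_abs_lt_dvd (Dvd.intro_left _ hcast.symm) (by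
    rw [abs_lt]
    constructor <;> omega)
  exact hab (Fin.ext (by omega))

theorem eventually_gridLabel_eq {N : ℝ} {k : ℕ} {x : ι → ℝ} (hx : gridWeight N k x ≠ 0) :
    ∀ᶠ y in 𝓝 x, gridLabel N k y = gridLabel N k x := by
  have h : ∀ i, ∀ᶠ y in 𝓝 x, gridLabel N k y i = gridLabel N k x i := by
    intro i
    have hlt : (gridLabel N k x i : ℝ) < N * x i - k / (Fintype.card ι + 1) :=
      (Int.floor_le _).lt_of_ne fun h => hx (gridWeight_eq_zero_iff.2 ⟨i, _, h.symm⟩)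
    have hcont : Continuous fun y : ι → ℝ => N * y i - k / (Fintype.card ι + 1) := by fun_prop
    filter_upwards [hcont.continuousAt.eventually (Ioo_mem_nhds hlt (Int.lt_floor_add_one _))]
      with y hy
    exact Int.floor_eq_iff.2 ⟨hy.1.le, hy.2⟩
  filter_upwards [eventually_all.2 h] with y hy
  exact funext hy

theorem dist_le_of_gridLabel_eq {N : ℝ} (hN : 0 < N) {k : ℕ} {x y : ι → ℝ}
    (h : gridLabel N k x = gridLabel N k y) : dist x y ≤ 1 / N := by
  refine (dist_pi_le_iff (by positivity)).2 fun i => ?_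
  have := (Int.abs_sub_lt_one_of_floor_eq_floor (congrFun h i)).le
  rw [Real.dist_eq, le_div_iff₀ hN, ← abs_of_pos hN, ← abs_mul]
  convert this using 2
  ring

theorem exists_representatives_gridLabel {α : Type*} [PseudoMetricSpace α] {p : (ι → ℝ) → α}
    {K : Set (ι → ℝ)} {C : Set α} (hp : UniformContinuousOn p K) (hpC : Set.MapsTo p K C)
    (hC : C.Nonempty) {d : ℝ} (hd : 0 < d) : ∃ (N : ℝ) (rep : ℕ → (ι → ℤ) → α),
      (∀ k l, rep k l ∈ C) ∧ ∀ k, ∀ x ∈ K, dist (rep k (gridLabel N k x)) (p x) < d := by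
  obtain ⟨y₀, hy₀⟩ := hC
  obtain ⟨δ, hδ, hpδ⟩ := Metric.uniformContinuousOn_iff.1 hp d hd
  have hN : 0 < 2 / δ := by positivity
  have hNδ : 1 / (2 / δ) < δ := by
    rw [one_div_div]
    exact half_lt_self hδ
  have hrep : ∀ (k : ℕ) (l : ι → ℤ), ∃ y ∈ C,
      ∀ x ∈ K, gridLabel (2 / δ) k x = l → dist y (p x) < d := by
    intro k l
    by_cases! h : ∃ x ∈ K, gridLabel (2 / δ) k x = l
    · obtain ⟨x, hx, rfl⟩ := h
      exact ⟨p x, hpC hx, fun x' hx' hl =>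
        hpδ x hx x' hx' ((dist_le_of_gridLabel_eq hN hl.symm).trans_lt hNδ)⟩
    · exact ⟨y₀, hy₀, fun x hx hl => absurd hl (h x hx)⟩
  choose rep hrepC hrep using hrep
  exact ⟨2 / δ, rep, hrepC, fun k x hx => hrep k _ x hx rfl⟩

variable {E : Type*} [NormedAddCommGroup E] [NormedSpace ℝ E]

theorem continuous_gridWeight_smul {N : ℝ} {k : ℕ} {F : (ι → ℤ) → E} {M : ℝ}
    (hF : ∀ l, ‖F l‖ ≤ M) : Continuous fun x => gridWeight N k x • F (gridLabel N k x) := by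
  refine continuous_iff_continuousAt.2 fun x => ?_
  by_cases hx : gridWeight N k x = 0
  · rw [ContinuousAt, hx, zero_smul]
    refine squeeze_zero_norm (a := fun y => gridWeight N k y * M) (fun y => ?_) ?_
    · rw [norm_smul, Real.norm_of_nonneg (gridWeight_nonneg N k y)]
      exact mul_le_mul_of_nonneg_left (hF _) (gridWeight_nonneg N k y)
    · simpa [hx] using ((continuous_gridWeight (ι := ι) N k).mul_const M).tendsto x
  · refine ((continuous_gridWeight N k).smul continuous_const).continuousAt.congr
      (f := fun y => gridWeight N k y • F (gridLabel N k x)) ?_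
    filter_upwards [eventually_gridLabel_eq hx] with y hy
    rw [hy]

-- The point of the construction is that a bounded number of the selections `c j` is blended near
-- any point, independently of `d`.
theorem exists_continuous_patching {C : Set E} (hC : Bornology.IsBounded C) (hne : C.Nonempty)
    {K : Set (ι → ℝ)} {p : (ι → ℝ) → E} (hp : UniformContinuousOn p K) (hpC : Set.MapsTo p K C)
    {c : ℕ → E → E} (hc : ∀ j, Set.MapsTo (c j) C C) {d : ℝ} (hd : 0 < d) :
    ∃ h : (ι → ℝ) → E, Continuous h ∧ ∀ x ∈ K, ∃ (u : ℕ → E) (t : Finset ℕ),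
      t ⊆ Finset.range (Fintype.card ι + 1) ∧ t.Nonempty ∧
      (∀ j ∈ t, u j ∈ C ∧ dist (u j) (p x) < d) ∧
      h x ∈ convexHull ℝ ((fun j => c j (u j)) '' t) := by
  obtain ⟨M, hM⟩ := hC.exists_norm_le
  obtain ⟨N, rep, hrepC, hrep⟩ := exists_representatives_gridLabel hp hpC hne hd
  refine ⟨fun x => (Finset.range (Fintype.card ι + 1)).centerMass (fun k => gridWeight N k x)
    fun k => c k (rep k (gridLabel N k x)), ?_, fun x hx => ?_⟩
  · refine Continuous.smul ?_ (continuous_finsetSum _ fun k _ => ?_)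
    · exact (continuous_finsetSum _ fun k _ => continuous_gridWeight N k).inv₀
        fun x => (sum_gridWeight_pos N x).ne'
    · exact continuous_gridWeight_smul (F := fun l => c k (rep k l)) fun l =>
        hM _ (hc k (hrepC k l))
  · refine ⟨fun k => rep k (gridLabel N k x), Finset.range (Fintype.card ι + 1), subset_rfl,
      by simp, fun k _ => ⟨hrepC k _, hrep k x hx⟩, ?_⟩
    exact Finset.centerMass_mem_convexHull _ (fun k _ => gridWeight_nonneg N k x)
      (sum_gridWeight_pos N x) fun k hk => Set.mem_image_of_mem _ hk

end GridPatching

section FixedPoint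

variable {E : Type*} [NormedAddCommGroup E] [NormedSpace ℝ E]

theorem exists_schauder_projection {C : Set E} (hC : IsCompact C) (hne : C.Nonempty) {ε : ℝ}
    (hε : 0 < ε) : ∃ (T : Finset E) (σ : E → T → ℝ), T.Nonempty ∧ (T : Set E) ⊆ C ∧
      ContinuousOn σ C ∧ ∀ y ∈ C, σ y ∈ stdSimplex ℝ T ∧ dist (∑ i, σ y i • (i : E)) y < ε := by
  obtain ⟨t, htC, htfin, htcov⟩ := hC.finite_cover_balls hε
  lift t to Finset E using htfin
  rw [Set.biUnion_eq_iUnion] at htcov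
  obtain ⟨ρ, hρ⟩ := PartitionOfUnity.exists_isSubordinate hC.isClosed
    (fun i : t => Metric.ball (i : E) ε) (fun _ => Metric.isOpen_ball) htcov
  have htne : t.Nonempty := by
    obtain ⟨y, hy⟩ := hne
    obtain ⟨i, -⟩ := Set.mem_iUnion.1 (htcov hy)
    exact ⟨i, i.2⟩
  refine ⟨t, fun y i => ρ i y, htne, htC, by fun_prop, fun y hy => ⟨⟨?_, ?_⟩, ?_⟩⟩
  · exact fun i => ρ.nonneg i y
  · rw [← finsum_eq_sum_of_fintype, ρ.sum_eq_one hy]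
  · rw [← finsum_eq_sum_of_fintype]
    refine ρ.finsum_smul_mem_convex (g := fun i _ => (i : E)) hy (fun i hi => ?_)
      (convex_ball y ε)
    rw [Metric.mem_ball_comm]
    exact hρ i (subset_tsupport _ hi)

theorem exists_mem_dist_lt_of_starConvex {C : Set E} (hC : IsCompact C) (hconv : Convex ℝ C)
    (hne : C.Nonempty) {G : Set (E × E)} (hG : IsCompact G) {s : E → E}
    (hs : ∀ x ∈ C, (x, s x) ∈ G) (hsC : Set.MapsTo s C C)
    (hstar : ∀ x ∈ C, StarConvex ℝ (s x) {z | (x, z) ∈ G}) {ε : ℝ} (hε : 0 < ε) :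
    ∃ p ∈ G, dist p.1 p.2 < ε := by
  have hε3 : 0 < ε / 3 := by positivity
  obtain ⟨T, σ, hT, hTC, hσ, hσC⟩ := exists_schauder_projection hC hne hε3
  have := hT.to_subtype
  obtain ⟨d, hd, c, hcC, hc⟩ :=
    exists_selections_convexHull_subset_thickening hC hG hs hsC hstar (Fintype.card T + 1) hε3
  let p : (T → ℝ) → E := fun l => ∑ i, l i • (i : E)
  have hp : UniformContinuousOn p (stdSimplex ℝ T) :=
    (isCompact_stdSimplex ℝ T).uniformContinuousOn_of_continuous (by fun_prop)
  have hpC : Set.MapsTo p (stdSimplex ℝ T) C := fun l hl =>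
    hconv.sum_mem (fun i _ => hl.1 i) hl.2 fun i _ => hTC i.2
  obtain ⟨h, hcont, hpatch⟩ := exists_continuous_patching hC.isBounded hne hp hpC hcC hd
  have hhC : Set.MapsTo h (stdSimplex ℝ T) C := by
    intro l hl
    obtain ⟨u, t, -, -, hu, hmem⟩ := hpatch l hl
    exact convexHull_min (Set.image_subset_iff.2 fun j hj => hcC j (hu j hj).1) hconv hmem
  obtain ⟨l, hl, hfix⟩ := exists_fixed_stdSimplex (f := σ ∘ h)
    (fun l hl => (hσC _ (hhC hl)).1) (hσ.comp hcont.continuousOn hhC)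
  have hph : dist (p l) (h l) < ε / 3 := by
    have := (hσC _ (hhC hl)).2
    rwa [show σ (h l) = l from hfix] at this
  obtain ⟨u, t, ht, hne', hu, hmem⟩ := hpatch l hl
  obtain ⟨⟨x, z⟩, hxz, hdist⟩ :=
    Metric.mem_thickening_iff.1 (hc (p l) u t ht hne' hu (h l) hmem)
  obtain ⟨hx, hz⟩ := max_lt_iff.1 hdist
  refine ⟨(x, z), hxz, ?_⟩
  have := dist_triangle4 x (p l) (h l) z
  simp only at hx hz ⊢
  linarith [dist_comm x (p l)]

theorem exists_fixed_of_starConvex {C : Set E} (hC : IsCompact C) (hconv : Convex ℝ C)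
    (hne : C.Nonempty) {G : Set (E × E)} (hG : IsClosed G) (hGC : G ⊆ C ×ˢ C) {s : E → E}
    (hs : ∀ x ∈ C, (x, s x) ∈ G) (hstar : ∀ x ∈ C, StarConvex ℝ (s x) {z | (x, z) ∈ G}) :
    ∃ x, (x, x) ∈ G := by
  have hGcomp : IsCompact G := (hC.prod hC).of_isClosed_subset hG hGC
  have hGne : G.Nonempty := (hne.image fun x => (x, s x)).mono (Set.image_subset_iff.2 hs)
  obtain ⟨⟨x, z⟩, hxz, hmin⟩ := hGcomp.exists_isMinOn hGne
    (continuous_fst.dist continuous_snd).continuousOn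
  suffices x = z from ⟨x, by simpa only [← this] using hxz⟩
  by_contra hxz'
  obtain ⟨p, hp, hlt⟩ := exists_mem_dist_lt_of_starConvex hC hconv hne hGcomp hs
    (fun x hx => (hGC (hs x hx)).2) hstar (dist_pos.2 hxz')
  exact hlt.not_ge (hmin hp)

end FixedPoint

section Farthest

variable {X : Type*} [NormedAddCommGroup X] {A : Set X} {q : X → X}

/-- The map `q` assigns to each point the unique farthest point of `A`. -/
def IsFarthestMap (A : Set X) (q : X → X) : Prop :=
  ∀ x, farPoints x A = {q x}

theorem norm_sub_le_farDist (hbd : Bornology.IsBounded A) (x : X) {a : X} (ha : a ∈ A) :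
    ‖x - a‖ ≤ farDist x A := by
  obtain ⟨M, hM⟩ := hbd.exists_norm_le
  refine le_csSup ⟨‖x‖ + M, Set.forall_mem_image.2 fun b hb => ?_⟩ ⟨a, ha, rfl⟩
  exact (norm_sub_le x b).trans (by gcongr; exact hM b hb)

theorem closure_subset_closedBall_farDist (hbd : Bornology.IsBounded A) (x : X) :
    closure A ⊆ Metric.closedBall x (farDist x A) :=
  closure_minimal (fun _ ha => mem_closedBall_iff_norm'.2 (norm_sub_le_farDist hbd x ha))
    Metric.isClosed_closedBall

theorem lipschitzWith_farDist (hbd : Bornology.IsBounded A) (hne : A.Nonempty) :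
    LipschitzWith 1 fun x => farDist x A := by
  refine LipschitzWith.of_le_add fun x y => csSup_le (hne.image _) ?_
  rintro _ ⟨a, ha, rfl⟩
  rw [dist_eq_norm]
  linarith [norm_sub_le_farDist hbd y ha, norm_sub_le_norm_sub_add_norm_sub x y a]

theorem dist_le_two_mul_farDist (hbd : Bornology.IsBounded A) {a b : X} (ha : a ∈ A) (hb : b ∈ A)
    (x : X) : dist a b ≤ 2 * farDist x A := by
  have hxa := norm_sub_le_farDist hbd x ha
  have hxb := norm_sub_le_farDist hbd x hb
  rw [← dist_eq_norm] at hxa hxb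
  linarith [dist_triangle_left a b x]

theorem exists_pos_forall_le_farDist (hbd : Bornology.IsBounded A) (hA : A.Nontrivial) :
    ∃ r > 0, ∀ x, r ≤ farDist x A := by
  obtain ⟨a, ha, b, hb, hab⟩ := hA
  refine ⟨dist a b / 2, half_pos (dist_pos.2 hab), fun x => ?_⟩
  linarith [dist_le_two_mul_farDist hbd ha hb x]

theorem IsFarthestMap.mem (hq : IsFarthestMap A q) (x : X) : q x ∈ A :=
  (hq x ▸ rfl : q x ∈ farPoints x A).1

theorem IsFarthestMap.norm_sub_eq (hq : IsFarthestMap A q) (x : X) : ‖x - q x‖ = farDist x A :=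
  (hq x ▸ rfl : q x ∈ farPoints x A).2

theorem IsFarthestMap.eq_of_farDist_le (hq : IsFarthestMap A q) (hbd : Bornology.IsBounded A)
    {x a : X} (ha : a ∈ A) (h : farDist x A ≤ ‖x - a‖) : a = q x := by
  have : a ∈ farPoints x A := ⟨ha, (norm_sub_le_farDist hbd x ha).antisymm h⟩
  rwa [hq x] at this

theorem IsFarthestMap.apply_ne (hq : IsFarthestMap A q) (hbd : Bornology.IsBounded A)
    (hA : A.Nontrivial) (x : X) : q x ≠ x := by
  intro h
  obtain ⟨r, hr, hle⟩ := exists_pos_forall_le_farDist hbd hA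
  have := hq.norm_sub_eq x
  rw [h, sub_self, norm_zero] at this
  exact (hr.trans_le (hle x)).ne this

-- The farthest point of the reflection `x + (x - z)` is also the farthest point of `x`.
theorem IsFarthestMap.two_mul_farDist_le (hq : IsFarthestMap A q) (hbd : Bornology.IsBounded A)
    {x z b : X} (hz : ‖x - z‖ ≤ farDist x A) (hb : b ∈ closure A)
    (h : 2 * farDist x A ≤ ‖(x - b) + (x - z)‖) :
    2 * farDist x A ≤ ‖(x - q x) + (x - z)‖ := by
  have hreflect : ∀ a, (x - a) + (x - z) = x + (x - z) - a := fun a => by abel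
  have hfar : 2 * farDist x A ≤ ‖(x - q (x + (x - z))) + (x - z)‖ := by
    rw [hreflect, hq.norm_sub_eq]
    rw [hreflect] at h
    exact h.trans (mem_closedBall_iff_norm'.1 (closure_subset_closedBall_farDist hbd _ hb))
  have hle := norm_add_le (x - q (x + (x - z))) (x - z)
  rwa [hq.eq_of_farDist_le hbd (hq.mem _) (x := x) (by linarith)] at hfar

theorem IsFarthestMap.tendsto_norm_sub (hq : IsFarthestMap A q) (hbd : Bornology.IsBounded A)
    {x : ℕ → X} {x₀ : X} (hx : Tendsto x atTop (𝓝 x₀)) :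
    Tendsto (fun n => ‖x₀ - q (x n)‖) atTop (𝓝 (farDist x₀ A)) := by
  have hD : Tendsto (fun n => farDist (x n) A) atTop (𝓝 (farDist x₀ A)) :=
    ((lipschitzWith_farDist hbd ⟨q x₀, hq.mem x₀⟩).continuous.tendsto x₀).comp hx
  have hlow : Tendsto (fun n => farDist (x n) A - ‖x n - x₀‖) atTop (𝓝 (farDist x₀ A)) := by
    simpa using hD.sub (tendsto_iff_norm_sub_tendsto_zero.1 hx)
  refine tendsto_of_tendsto_of_tendsto_of_le_of_le hlow tendsto_const_nhds (fun n => ?_)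
    fun n => norm_sub_le_farDist hbd x₀ (hq.mem (x n))
  have := norm_sub_le_norm_sub_add_norm_sub (x n) x₀ (q (x n))
  rw [hq.norm_sub_eq] at this
  simp only
  linarith

theorem mem_derivedSet_or_eventually_eq {α : Type*} [TopologicalSpace α] {s : Set α} {a : ℕ → α}
    {b : α} (ha : ∀ n, a n ∈ s) (hab : Tendsto a atTop (𝓝 b)) :
    b ∈ derivedSet s ∨ ∀ᶠ n in atTop, a n = b := by
  by_cases! hfreq : ∃ᶠ n in atTop, a n ≠ b
  · exact .inl (accPt_iff_frequently.2
      (hab.frequently (hfreq.mono fun n hn => ⟨hn, ha n⟩)))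
  · exact .inr (by simpa using hfreq)

theorem IsFarthestMap.exists_subseq_tendsto (hq : IsFarthestMap A q)
    (hbd : Bornology.IsBounded A) (hM : MCompact A) {x : ℕ → X} {x₀ : X}
    (hx : Tendsto x atTop (𝓝 x₀)) : ∃ (φ : ℕ → ℕ) (b : X), StrictMono φ ∧
      Tendsto (fun n => q (x (φ n))) atTop (𝓝 b) ∧
      (b ∈ derivedSet A ∧ ‖x₀ - b‖ = farDist x₀ A ∨
        b = q x₀ ∧ ∀ᶠ n in atTop, q (x (φ n)) = b) := by
  have hmax := hq.tendsto_norm_sub hbd hx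
  obtain ⟨φ, b, hφ, hb⟩ := hM (fun n => q (x n)) ⟨fun n => hq.mem (x n), x₀, hmax⟩
  have hfar : ‖x₀ - b‖ = farDist x₀ A :=
    tendsto_nhds_unique (tendsto_const_nhds.sub hb).norm (hmax.comp hφ.tendsto_atTop)
  refine ⟨φ, b, hφ, hb, ?_⟩
  rcases mem_derivedSet_or_eventually_eq (fun n => hq.mem _) hb with hderived | hconst
  · exact .inl ⟨hderived, hfar⟩
  · obtain ⟨n, hn⟩ := hconst.exists
    exact .inr ⟨hq.eq_of_farDist_le hbd (hn ▸ hq.mem _) hfar.ge, hconst⟩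

end Farthest

section FarStar

variable {X : Type*} [NormedAddCommGroup X] [NormedSpace ℝ X] {A C : Set X} {q c : X → X}
  {x y a b w : X}

/-- The union of the segments joining the centre `y` to the points `z` of `C` whose reflection
`x + (x - z)` has distance at least `2 * farDist x A` from `a`. The condition on `z` is multiplied
by the parameter `t` of the segment, so that it is void at the centre and closed in all data. -/
def farStar (A C : Set X) (x a y : X) : Set X :=
  {w | ∃ t ∈ Set.Icc (0 : ℝ) 1, ∃ z ∈ C, AffineMap.lineMap y z t = w ∧
    t * (2 * farDist x A - ‖(x - a) + (x - z)‖) ≤ 0}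

theorem mem_farStar_of_le (hw : w ∈ C) (h : 2 * farDist x A ≤ ‖(x - a) + (x - w)‖) :
    w ∈ farStar A C x a y :=
  ⟨1, by simp, w, hw, by simp, by linarith⟩

theorem center_mem_farStar (hy : y ∈ C) : y ∈ farStar A C x a y :=
  ⟨0, by simp, y, hy, by simp, by simp⟩

theorem farStar_subset (hC : Convex ℝ C) (hy : y ∈ C) : farStar A C x a y ⊆ C := by
  rintro _ ⟨t, ht, z, hz, rfl, -⟩
  exact hC.lineMap_mem hy hz ht

theorem starConvex_farStar : StarConvex ℝ y (farStar A C x a y) := by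
  rintro _ ⟨t, ht, z, hz, rfl, hle⟩ α β hα hβ hαβ
  refine ⟨β * t, ⟨mul_nonneg hβ ht.1, mul_le_one₀ (by linarith) ht.1 ht.2⟩, z, hz, ?_, ?_⟩
  · rw [← sub_eq_iff_eq_add.2 hαβ.symm, AffineMap.lineMap_apply_module,
      AffineMap.lineMap_apply_module]
    module
  · rw [mul_assoc]
    exact mul_nonpos_of_nonneg_of_nonpos hβ hle

theorem isClosed_setOf_mem_farStar (hbd : Bornology.IsBounded A) (hne : A.Nonempty)
    (hC : IsCompact C) :
    IsClosed {p : X × X × X × X | p.2.2.2 ∈ farStar A C p.1 p.2.1 p.2.2.1} := by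
  have := isCompact_iff_compactSpace.1 hC
  have hfar := (lipschitzWith_farDist hbd hne).continuous
  let S : Set ((Set.Icc (0 : ℝ) 1 × C) × X × X × X × X) :=
    {p | AffineMap.lineMap p.2.2.2.1 (p.1.2 : X) (p.1.1 : ℝ) = p.2.2.2.2} ∩
      {p | p.1.1 * (2 * farDist p.2.1 A - ‖(p.2.1 - p.2.2.1) + (p.2.1 - p.1.2)‖) ≤ 0}
  have hS : IsClosed S := by
    refine (isClosed_eq ?_ (by fun_prop)).inter (isClosed_le ?_ continuous_const)
    · simp only [AffineMap.lineMap_apply_module]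
      fun_prop
    · exact .mul (by fun_prop) (((hfar.comp (by fun_prop)).const_mul 2).sub (by fun_prop))
  convert isClosedMap_snd_of_compactSpace S hS
  ext p
  simp [S, farStar, and_left_comm (a := _ ∈ C)]

theorem mul_le_norm_smul_add_smul {u v : X} {D α β : ℝ} (hu : ‖u‖ ≤ D) (hv : ‖v‖ ≤ D)
    (huv : 2 * D ≤ ‖u + v‖) (hα : 0 ≤ α) (hβ : 0 ≤ β) :
    (α + β) * D ≤ ‖α • u + β • v‖ := by
  wlog h : β ≤ α generalizing u v α β
  · rw [add_comm α, add_comm (α • u)]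
    exact this hv hu (by rwa [add_comm]) hβ hα (le_of_not_ge h)
  have htriangle : α * ‖u + v‖ ≤ ‖α • u + β • v‖ + (α - β) * ‖v‖ :=
    calc α * ‖u + v‖ = ‖(α • u + β • v) + (α - β) • v‖ := by
          rw [← Real.norm_of_nonneg hα, ← norm_smul, Real.norm_of_nonneg hα]
          congr 1
          module
      _ ≤ ‖α • u + β • v‖ + (α - β) * ‖v‖ := by
          grw [norm_add_le, norm_smul (α - β), Real.norm_of_nonneg (sub_nonneg.2 h)]
  nlinarith [mul_le_mul_of_nonneg_left huv hα, mul_le_mul_of_nonneg_left hv (sub_nonneg.2 h)]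

theorem two_mul_farDist_le_of_mem_farStar (hCA : C ⊆ Metric.closedBall x (farDist x A))
    (hb : ‖x - b‖ = farDist x A) (hw : w ∈ farStar A C x b b) :
    2 * farDist x A ≤ ‖(x - b) + (x - w)‖ := by
  obtain ⟨t, ⟨ht₀, ht₁⟩, z, hz, rfl, hle⟩ := hw
  rcases ht₀.eq_or_lt with rfl | ht
  · rw [AffineMap.lineMap_apply_zero, ← two_smul ℝ, norm_smul, hb, Real.norm_two]
  · have := mul_le_norm_smul_add_smul hb.le (mem_closedBall_iff_norm'.1 (hCA hz))
      (sub_nonpos.1 (nonpos_of_mul_nonpos_right hle ht)) (show 0 ≤ 2 - t by linarith) ht₀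
    rw [sub_add_cancel] at this
    convert this using 2
    rw [AffineMap.lineMap_apply_module]
    module

-- When `x = (1 - t) • y + t • z`, the identity
-- `(1 - t) • (y - a) = (1 - t) • (x - a) + t • (x - z)` compares the distances from `x` and `y` to
-- any point `a`.
theorem IsFarthestMap.apply_eq_of_mem_farStar (hq : IsFarthestMap A q)
    (hbd : Bornology.IsBounded A) (hCA : C ⊆ Metric.closedBall x (farDist x A))
    (hx : x ∈ farStar A C x (q x) y) : q y = q x := by
  obtain ⟨t, ⟨ht₀, ht₁⟩, z, hz, hline, hle⟩ := hx
  rcases ht₀.eq_or_lt with rfl | ht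
  · rw [← hline, AffineMap.lineMap_apply_zero]
  have hs : 0 ≤ 1 - t := sub_nonneg.2 ht₁
  have hxz : ‖x - z‖ ≤ farDist x A := mem_closedBall_iff_norm'.1 (hCA hz)
  have hnorm : ∀ a, (1 - t) * ‖y - a‖ = ‖(1 - t) • (x - a) + t • (x - z)‖ := fun a => by
    have hy : (1 - t) • y = x - t • z := by
      rw [← hline, AffineMap.lineMap_apply_module, add_sub_cancel_right]
    rw [← Real.norm_of_nonneg hs, ← norm_smul, Real.norm_of_nonneg hs, smul_sub, hy]
    congr 1
    module
  have hlow : farDist x A ≤ (1 - t) * ‖y - q x‖ := by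
    rw [hnorm]
    simpa using mul_le_norm_smul_add_smul (hq.norm_sub_eq x).le hxz
      (sub_nonpos.1 (nonpos_of_mul_nonpos_right hle ht)) hs ht₀
  have hupp : (1 - t) * ‖y - q y‖ ≤ farDist x A :=
    calc (1 - t) * ‖y - q y‖ ≤ (1 - t) * ‖x - q y‖ + t * ‖x - z‖ := by
          grw [hnorm, norm_add_le, norm_smul, norm_smul, Real.norm_of_nonneg hs,
            Real.norm_of_nonneg ht₀]
      _ ≤ (1 - t) * farDist x A + t * farDist x A := by
          gcongr
          exact norm_sub_le_farDist hbd x (hq.mem y)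
      _ = farDist x A := by ring
  rcases hs.eq_or_lt with hs | hs
  · rw [← hs, zero_mul] at hlow
    have := dist_le_two_mul_farDist hbd (hq.mem y) (hq.mem x) x
    exact dist_le_zero.1 (by linarith)
  · rw [hq.norm_sub_eq] at hupp
    exact (hq.eq_of_farDist_le hbd (hq.mem x) (le_of_mul_le_mul_left (hupp.trans hlow) hs)).symm

/-- The relation on `C` whose value at `x` is the star around the point `c (q x)` that `farStar`
associates with the farthest point `q x`. -/
def farRelation (A C : Set X) (q c : X → X) : Set (X × X) :=
  {p | p.1 ∈ C ∧ p.2 ∈ farStar A C p.1 (q p.1) (c (q p.1))}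

theorem isClosed_farRelation (hq : IsFarthestMap A q) (hbd : Bornology.IsBounded A)
    (hM : MCompact A) (hC : IsCompact C) (hconv : Convex ℝ C) (hAC : derivedSet A ⊆ C)
    (hCA : ∀ x, C ⊆ Metric.closedBall x (farDist x A))
    (hc : ∀ b ∈ derivedSet A, Tendsto c (𝓝[A] b) (𝓝 b)) :
    IsClosed (farRelation A C q c) := by
  refine IsSeqClosed.isClosed fun p ⟨x, w⟩ hp hlim => ?_
  obtain ⟨hx, hw⟩ := (Prod.tendsto_iff _ _).1 hlim
  have hxC : x ∈ C := hC.isClosed.mem_of_tendsto hx (.of_forall fun n => (hp n).1)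
  refine ⟨hxC, ?_⟩
  obtain ⟨φ, b, hφ, hb, hcase⟩ := hq.exists_subseq_tendsto hbd hM hx
  have hlimit : ∀ y, Tendsto (fun n => c (q (p (φ n)).1)) atTop (𝓝 y) → w ∈ farStar A C x b y :=
    fun y hy => (isClosed_setOf_mem_farStar hbd ⟨_, hq.mem x⟩ hC).mem_of_tendsto
      ((hx.comp hφ.tendsto_atTop).prodMk_nhds
        (hb.prodMk_nhds (hy.prodMk_nhds (hw.comp hφ.tendsto_atTop))))
      (.of_forall fun n => (hp (φ n)).2)
  rcases hcase with ⟨hbA, hfar⟩ | ⟨rfl, hconst⟩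
  · have hwb := hlimit b ((hc b hbA).comp
      (tendsto_nhdsWithin_iff.2 ⟨hb, .of_forall fun n => hq.mem _⟩))
    have hwC : w ∈ C := farStar_subset hconv (hAC hbA) hwb
    exact mem_farStar_of_le hwC (hq.two_mul_farDist_le hbd
      (mem_closedBall_iff_norm'.1 (hCA x hwC)) (derivedSet_subset_closure A hbA)
      (two_mul_farDist_le_of_mem_farStar (hCA x) hfar hwb))
  · exact hlimit _ (tendsto_const_nhds.congr' (hconst.mono fun n hn => (congrArg c hn).symm))

end FarStar

section Center

theorem exists_forall_mem_tendsto_nhds {α : Type*} [PseudoMetricSpace α] {B : Set α}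
    (hB : IsCompact B) (hne : B.Nonempty) :
    ∃ r : α → α, (∀ a, r a ∈ B) ∧ ∀ b ∈ B, Tendsto r (𝓝 b) (𝓝 b) := by
  choose r hrB hr using fun a => hB.exists_infDist_eq_dist hne a
  have hle : ∀ a b, b ∈ B → dist a (r a) ≤ dist a b := fun a b hb =>
    hr a ▸ Metric.infDist_le_dist_of_mem hb
  refine ⟨r, hrB, fun b hb => ?_⟩
  refine (tendsto_iff_of_dist (squeeze_zero (fun _ => dist_nonneg) (fun a => hle a b hb) ?_)).1
    tendsto_id
  simpa using (continuous_id.dist (continuous_const (y := b))).tendsto b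

variable {X : Type*} [NormedAddCommGroup X] {A : Set X} {q : X → X}

theorem IsFarthestMap.exists_center (hq : IsFarthestMap A q) (hbd : Bornology.IsBounded A)
    (hA : A.Nontrivial) (hc : IsCompact (derivedSet A)) :
    ∃ (B : Set X) (c : X → X), IsCompact B ∧ derivedSet A ⊆ B ∧ B ⊆ closure A ∧
      (∀ a, c a ∈ B) ∧ (∀ a, q (c a) ≠ a) ∧
      ∀ b ∈ derivedSet A, Tendsto c (𝓝 b) (𝓝 b) := by
  classical
  obtain ⟨a₁, ha₁⟩ := hA.nonempty
  let B : Set X := insert a₁ (insert (q a₁) (derivedSet A))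
  have hB : IsCompact B := (hc.insert _).insert _
  have hderived : derivedSet A ⊆ B := (Set.subset_insert _ _).trans (Set.subset_insert _ _)
  have hBA : B ⊆ closure A := Set.insert_subset (subset_closure ha₁)
    (Set.insert_subset (subset_closure (hq.mem a₁)) (derivedSet_subset_closure A))
  obtain ⟨r, hrB, hr⟩ := exists_forall_mem_tendsto_nhds hB ⟨a₁, Set.mem_insert _ _⟩
  have hc : ∀ a, ∃ y ∈ B, q y ≠ a ∧ (q (r a) ≠ a → y = r a) := fun a => by
    by_cases hra : q (r a) = a
    · by_cases ha : q a₁ = a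
      · exact ⟨q a₁, by simp [B], ha ▸ hq.apply_ne hbd hA (q a₁), absurd hra⟩
      · exact ⟨a₁, by simp [B], ha, absurd hra⟩
    · exact ⟨r a, hrB a, hra, fun _ => rfl⟩
  choose c hcB hcne hcr using hc
  refine ⟨B, c, hB, hderived, hBA, hcB, hcne, fun b hb => ?_⟩
  have hrb := hr b (hderived hb)
  obtain ⟨δ, hδ, hle⟩ := exists_pos_forall_le_farDist hbd hA
  have hdist : Tendsto (fun a => dist (r a) a) (𝓝 b) (𝓝 0) := by
    simpa using hrb.dist tendsto_id
  refine hrb.congr' ?_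
  filter_upwards [hdist.eventually (gt_mem_nhds hδ)] with a ha
  refine (hcr a fun h => ha.not_ge ?_).symm
  calc δ ≤ farDist (r a) A := hle _
    _ = dist (r a) a := by rw [← hq.norm_sub_eq, h, dist_eq_norm]

theorem isCompact_closedConvexHull {X : Type*} [NormedAddCommGroup X] [NormedSpace ℝ X]
    [CompleteSpace X] {B : Set X} (hB : IsCompact B) : IsCompact (closedConvexHull ℝ B) := by
  rw [closedConvexHull_eq_closure_convexHull]
  exact hB.totallyBounded.convexHull.closure.isCompact_of_isClosed isClosed_closure

end Center

theorem stmt_5 {X : Type*} [NormedAddCommGroup X] [NormedSpace ℝ X] [CompleteSpace X]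
    (A : Set X) (hne : A.Nonempty) (hbd : Bornology.IsBounded A)
    (hur : UniquelyRemotal A) (hM : MCompact A)
    (hc : IsCompact (derivedSet A)) : ∃ a : X, A = {a} := by
  rw [Set.exists_eq_singleton_iff_nonempty_subsingleton]
  refine ⟨hne, Set.not_nontrivial_iff.1 fun hA => ?_⟩
  obtain ⟨q, hq⟩ : ∃ q, IsFarthestMap A q := Classical.skolem.1 hur
  obtain ⟨B, c, hB, hAB, hBA, hcB, hqc, hcont⟩ := hq.exists_center hbd hA hc
  set C := closedConvexHull ℝ B
  have hBC : B ⊆ C := subset_closedConvexHull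
  have hCA : ∀ x, C ⊆ Metric.closedBall x (farDist x A) := fun x =>
    closedConvexHull_min (hBA.trans (closure_subset_closedBall_farDist hbd x))
      (convex_closedBall _ _) Metric.isClosed_closedBall
  have hC : IsCompact C := isCompact_closedConvexHull hB
  have hconv : Convex ℝ C := convex_closedConvexHull
  obtain ⟨x, -, hx⟩ := exists_fixed_of_starConvex hC hconv ⟨c 0, hBC (hcB 0)⟩
    (isClosed_farRelation hq hbd hM hC hconv (hAB.trans hBC) hCA fun b hb =>
      (hcont b hb).mono_left nhdsWithin_le_nhds)
    (fun p hp => ⟨hp.1, farStar_subset hconv (hBC (hcB _)) hp.2⟩)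
    (fun x hx => ⟨hx, center_mem_farStar (hBC (hcB _))⟩)
    fun x hx => by simpa [farRelation, hx] using starConvex_farStar
  exact hqc _ (hq.apply_eq_of_mem_farStar hbd (hCA x) hx)
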